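/- Let S be a finite join-semilattice with a greatest element ⊤, and suppose S has at least one non-generator. Then there exists an element Φ ∈ S which is simultaneously a greatest lower bound of the set of elements maximal below ⊤ and a least upper bound of the set of all non-generators of S. -/

import Mathlib

def NonGenerator {S : Type*} [PartialOrder S] [OrderTop S] (a : S) : Prop :=
  ∀ e : S, (¬ ∃ p : S, p < ⊤ ∧ a ≤ p ∧ e ≤ p) → e = ⊤

def MaximalBelowTop {S : Type*} [PartialOrder S] [OrderTop S] (p : S) : Prop :=
  p < ⊤ ∧ ¬ ∃ q : S, p < q ∧ q < ⊤

theorem stmt_14 {S : Type*} [SemilatticeSup S] [OrderTop S] [Finite S]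
    (hne : ∃ a : S, NonGenerator a) :
    ∃ Φ : S, IsGLB {p : S | MaximalBelowTop p} Φ ∧
      IsLUB {x : S | NonGenerator x} Φ := by
  have key : {x : S | NonGenerator x} = lowerBounds {p : S | MaximalBelowTop p} := by
    ext a
    constructor
    · intro ha p hp
      by_contra hap
      refine hp.1.ne (ha p ?_)
      rintro ⟨q, hq, haq, hpq⟩
      rcases hpq.eq_or_lt with h | h
      · exact hap (h ▸ haq)
      · exact hp.2 ⟨q, h, hq⟩
    · intro ha e he
      by_contra hne'
      obtain ⟨p, hep, hp⟩ := (Set.toFinite {x : S | x < ⊤}).exists_le_maximal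
        (show e ∈ {x : S | x < ⊤} from lt_top_iff_ne_top.2 hne')
      have hpm : MaximalBelowTop p :=
        ⟨hp.1, fun ⟨q, hpq, hq⟩ => absurd (hp.2 hq hpq.le) (not_le_of_gt hpq)⟩
      exact he ⟨p, hp.1, ha hpm, hep⟩
  obtain ⟨a, ha⟩ := hne
  obtain ⟨m, -, hm⟩ := (Set.toFinite {x : S | NonGenerator x}).exists_le_maximal
    (show a ∈ {x : S | NonGenerator x} from ha)
  rw [key] at hm
  have hg : IsGreatest (lowerBounds {p : S | MaximalBelowTop p}) m := by
    refine ⟨hm.1, fun x hx => ?_⟩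
    have hs : x ⊔ m ∈ lowerBounds {p : S | MaximalBelowTop p} :=
      fun p hp => sup_le (hx hp) (hm.1 hp)
    exact le_sup_left.trans (hm.2 hs le_sup_right)
  exact ⟨m, hg, key ▸ hg.isLUB⟩
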